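/- arXiv:math/0303086 — 2 statements merged into one kernel-verified Lean document; each statement's English description precedes it below -/
import Mathlib

section
/- Let (R,m) be an Artinian local ring with m² = (0) that is not Gorenstein. Then every finitely generated R-module of G-dimension zero is free. -/
open CategoryTheory

noncomputable abbrev ExtGrp (R : Type) [CommRing R] (M N : Type) [AddCommGroup M] [Module R M]
    [AddCommGroup N] [Module R N] (i : ℕ) : Type :=
  ((Ext R (ModuleCat R) i).obj (Opposite.op (ModuleCat.of R M))).obj (ModuleCat.of R N)

/-- G-dimension zero. -/
def GDimZero (R : Type) [CommRing R] (M : Type) [AddCommGroup M] [Module R M] : Prop :=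
  Function.Bijective (Module.Dual.eval R M) ∧
  (∀ i : ℕ, 0 < i → Subsingleton (ExtGrp R M R i)) ∧
  (∀ i : ℕ, 0 < i → Subsingleton (ExtGrp R (Module.Dual R M) R i))

/-- finite self-injective dimension -/
def HasFiniteSelfInjDim (R : Type) [CommRing R] : Prop :=
  ∃ n : ℕ, ∀ (N : ModuleCat R) (i : ℕ), n < i →
    Subsingleton (((Ext R (ModuleCat R) i).obj (Opposite.op N)).obj (ModuleCat.of R R))

/-- Gorenstein local ring -/
def IsGorensteinLocalRing (R : Type) [CommRing R] : Prop :=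
  IsNoetherianRing R ∧ IsLocalRing R ∧ HasFiniteSelfInjDim R

/-- length of a module, as Krull dimension of its submodule lattice -/
noncomputable def mlength (R : Type) [CommRing R] (M : Type) [AddCommGroup M] [Module R M] :
    WithBot ℕ∞ :=
  Order.krullDim (Submodule R M)

/-!
Let `P → M` be a minimal free cover. Its kernel lies in `𝔪P`, hence is killed by `𝔪`, so if `M` is
not free the kernel is a nonzero `R ⧸ 𝔪`-vector space and has `R ⧸ 𝔪` as a direct summand.
Dimension shifting turns `Extⁿ⁺²(M, Q) = 0` into `Extⁿ⁺¹(R ⧸ 𝔪, Q) = 0`. If `𝔪 ≠ 0`,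
the cover `R → R ⧸ 𝔪` is itself minimal with nonzero kernel, so the same step can be repeated down
to `Ext¹(R ⧸ 𝔪, Q) = 0`. As every proper ideal is a direct summand of `𝔪`, this vanishing gives
Baer's criterion for `Q`; the theorem is the case `Q = R`.
-/

universe w v u

open IsLocalRing

section Ext

variable {C : Type u} [Category.{v} C] [Abelian C]

theorem subsingleton_ext_of_retract [HasExt.{w} C] {X X' Y : C} {n : ℕ} (r : Retract X X')
    [Subsingleton (Abelian.Ext X' Y n)] : Subsingleton (Abelian.Ext X Y n) := by
  refine subsingleton_of_forall_eq 0 fun e => ?_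
  calc e = (Abelian.Ext.mk₀ r.i).comp ((Abelian.Ext.mk₀ r.r).comp e (zero_add n))
        (zero_add n) := by simp
    _ = 0 := by rw [Subsingleton.elim ((Abelian.Ext.mk₀ r.r).comp e (zero_add n)) 0,
        Abelian.Ext.comp_zero]

theorem subsingleton_ext_X₁_of_shortExact [HasExt.{w} C] {S : ShortComplex C} (hS : S.ShortExact)
    {Y : C} {n : ℕ} [Subsingleton (Abelian.Ext S.X₂ Y n)]
    [Subsingleton (Abelian.Ext S.X₃ Y (n + 1))] : Subsingleton (Abelian.Ext S.X₁ Y n) := by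
  refine subsingleton_of_forall_eq 0 fun e => ?_
  obtain ⟨x, rfl⟩ := Abelian.Ext.contravariant_sequence_exact₁ hS Y e (add_comm 1 n)
    (Subsingleton.elim _ _)
  rw [Subsingleton.elim x 0, Abelian.Ext.comp_zero]

theorem subsingleton_derivedExt_iff_subsingleton_ext {R : Type*} [Ring R] [Linear R C]
    [EnoughProjectives C] [HasExt.{w} C] (X Y : C) (n : ℕ) :
    Subsingleton (((Ext R C (n + 1)).obj (Opposite.op X)).obj Y) ↔
      Subsingleton (Abelian.Ext X Y (n + 1)) := by
  let P := projectiveResolution X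
  have derived_iff : Subsingleton (((Ext R C (n + 1)).obj (Opposite.op X)).obj Y) ↔
      ∀ f : P.complex.X (n + 1) ⟶ Y, P.complex.d (n + 2) (n + 1) ≫ f = 0 →
        ∃ g : P.complex.X n ⟶ Y, P.complex.d (n + 1) n ≫ g = f := by
    rw [← ModuleCat.isZero_iff_subsingleton, (P.isoExt (n + 1) Y).isZero_iff,
      ← HomologicalComplex.exactAt_iff_isZero_homology,
      HomologicalComplex.exactAt_iff' _ n (n + 1) (n + 2) (by simp) (by simp),
      ShortComplex.moduleCat_exact_iff]
    rfl
  rw [derived_iff]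
  constructor
  · intro h
    refine subsingleton_of_forall_eq 0 fun e => ?_
    obtain ⟨f, hf, rfl⟩ := P.extMk_surjective e (n + 2) rfl
    exact (P.extMk_eq_zero_iff f (n + 2) rfl hf n rfl).2 (h f hf)
  · intro h f hf
    exact (P.extMk_eq_zero_iff f (n + 2) rfl hf n rfl).1 (Subsingleton.elim _ _)

end Ext

theorem exists_extension_of_subsingleton_ext_one {R : Type u} [Ring R] [Small.{v} R]
    {A Q : Type v} [AddCommGroup A] [Module R A] [AddCommGroup Q] [Module R Q]
    (N : Submodule R A)
    [Subsingleton (Abelian.Ext (ModuleCat.of R (A ⧸ N)) (ModuleCat.of R Q) 1)]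
    (f : N →ₗ[R] Q) : ∃ g : A →ₗ[R] Q, g ∘ₗ N.subtype = f := by
  let S := ModuleCat.shortComplexOfCompEqZero N.subtype N.mkQ (by ext; simp)
  have hS : S.ShortExact := ModuleCat.shortComplex_shortExact S
    (LinearMap.exact_subtype_mkQ N) N.injective_subtype N.mkQ_surjective
  obtain ⟨e, he⟩ := Abelian.Ext.contravariant_sequence_exact₁ hS (ModuleCat.of R Q)
    (Abelian.Ext.mk₀ (ModuleCat.ofHom f)) (add_zero 1) (Subsingleton.elim _ _)
  obtain ⟨g, rfl⟩ := Abelian.Ext.homEquiv₀.symm.surjective e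
  have hg : ModuleCat.ofHom N.subtype ≫ g = ModuleCat.ofHom f :=
    Abelian.Ext.homEquiv₀.symm.injective (by simpa using he)
  exact ⟨g.hom, congrArg ModuleCat.Hom.hom hg⟩

section Module

variable {R : Type u} [CommRing R]

theorem isTorsionBySet_of_le_smul_top {M : Type v} [AddCommGroup M] [Module R M] {I : Ideal R}
    (hI : I ^ 2 = ⊥) {N : Submodule R M} (hN : N ≤ I • ⊤) : Module.IsTorsionBySet R N I := by
  rintro x ⟨a, ha⟩
  have hax : a • (x : M) ∈ I • I • (⊤ : Submodule R M) := Submodule.smul_mem_smul ha (hN x.2)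
  rw [← Submodule.mul_smul, ← pow_two, hI, Submodule.bot_smul] at hax
  exact Subtype.ext hax

theorem isSemisimpleModule_of_isTorsionBySet {L : Type v} [AddCommGroup L] [Module R L]
    {I : Ideal R} [I.IsMaximal] (hL : Module.IsTorsionBySet R L I) : IsSemisimpleModule R L := by
  let := Ideal.Quotient.field I
  let := hL.module
  exact hL.isSemisimpleModule_iff.1 inferInstance

theorem nonempty_retract_quotient_of_isTorsionBySet {L : Type u} [AddCommGroup L] [Module R L]
    [Nontrivial L] {I : Ideal R} [I.IsMaximal] (hL : Module.IsTorsionBySet R L I) :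
    Nonempty (Retract (ModuleCat.of R (R ⧸ I)) (ModuleCat.of R L)) := by
  have : IsSemisimpleModule R L := isSemisimpleModule_of_isTorsionBySet hL
  have : IsSimpleModule R (R ⧸ I) := isSimpleModule_iff_isCoatom.2 (Ideal.isMaximal_def.1 ‹_›)
  obtain ⟨y, hy⟩ := exists_ne (0 : L)
  let i : R ⧸ I →ₗ[R] L := I.liftQ (LinearMap.toSpanSingleton R L y)
    fun a ha => LinearMap.mem_ker.2 (hL (a := ⟨a, ha⟩))
  have hi : i ≠ 0 := fun h => hy <| by
    calc y = i (Submodule.Quotient.mk 1) := by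
          rw [Submodule.liftQ_apply, LinearMap.toSpanSingleton_apply, one_smul]
      _ = 0 := LinearMap.congr_fun h _
  obtain ⟨q, hq⟩ := IsSemisimpleModule.extension_property i (LinearMap.injective_of_ne_zero hi)
    LinearMap.id
  exact ⟨⟨ModuleCat.ofHom i, ModuleCat.ofHom q, ModuleCat.hom_ext hq⟩⟩

theorem eq_top_of_isNilpotent_of_smul_top_sup_eq_top {M : Type v} [AddCommGroup M] [Module R M]
    {I : Ideal R} (hI : IsNilpotent I) {N : Submodule R M} (hN : I • ⊤ ⊔ N = ⊤) : N = ⊤ := by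
  have pow_smul_sup (n : ℕ) : I ^ n • ⊤ ⊔ N = ⊤ := by
    induction n with
    | zero => simp
    | succ n ih =>
      have smul_sup_le : I • (I ^ n • ⊤ ⊔ N) ≤ I ^ (n + 1) • ⊤ ⊔ N := by
        rw [Submodule.smul_sup, pow_succ', Submodule.mul_smul]
        exact sup_le_sup_left Submodule.smul_le_right _
      rw [eq_top_iff]
      calc ⊤ = I • (I ^ n • ⊤ ⊔ N) ⊔ N := by rw [ih, hN]
        _ ≤ I ^ (n + 1) • ⊤ ⊔ N := sup_le smul_sup_le le_sup_right
  obtain ⟨n, hn⟩ := hI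
  simpa [hn] using pow_smul_sup n

theorem exists_finsupp_surjective_ker_le_smul_top (I : Ideal R) [I.IsMaximal]
    (hI : IsNilpotent I) (M : Type v) [AddCommGroup M] [Module R M] :
    ∃ (ι : Type v) (φ : (ι →₀ R) →ₗ[R] M),
      Function.Surjective φ ∧ LinearMap.ker φ ≤ I • ⊤ := by
  let := Ideal.Quotient.field I
  let b := Module.Basis.ofVectorSpace (R ⧸ I) (M ⧸ (I • ⊤ : Submodule R M))
  obtain ⟨v, hv⟩ : ∃ v, (I • ⊤ : Submodule R M).mkQ ∘ v = b :=
    (Submodule.mkQ_surjective _).comp_left b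
  refine ⟨_, Finsupp.linearCombination R v, ?_, fun c hc => ?_⟩
  · have map_mkQ_span : (Submodule.span R (Set.range v)).map (I • ⊤ : Submodule R M).mkQ = ⊤ := by
      rw [Submodule.map_span, ← Set.range_comp, hv,
        ← Submodule.restrictScalars_span R (R ⧸ I) Ideal.Quotient.mk_surjective, b.span_eq,
        Submodule.restrictScalars_top]
    rw [← LinearMap.range_eq_top, Finsupp.range_linearCombination]
    apply eq_top_of_isNilpotent_of_smul_top_sup_eq_top hI
    rw [← Submodule.comap_map_mkQ, map_mkQ_span, Submodule.comap_top]
  · have sum_residue_smul : ∑ j ∈ c.support, Ideal.Quotient.mk I (c j) • b j = 0 := by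
      calc ∑ j ∈ c.support, Ideal.Quotient.mk I (c j) • b j
          = Finsupp.linearCombination R b c := rfl
        _ = (I • ⊤ : Submodule R M).mkQ (Finsupp.linearCombination R v c) := by
          rw [Finsupp.apply_linearCombination, hv]
        _ = 0 := by rw [LinearMap.mem_ker.1 hc, map_zero]
    have coeff_mem : ∀ j ∈ c.support, c j ∈ I := fun j hj => Ideal.Quotient.eq_zero_iff_mem.1
      (linearIndependent_iff'.1 b.linearIndependent c.support _ sum_residue_smul j hj)
    rw [← c.sum_single]
    refine Submodule.sum_mem _ fun j hj => ?_
    simpa using Submodule.smul_mem_smul (coeff_mem j hj)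
      (Submodule.mem_top (x := Finsupp.single j (1 : R)))

end Module

section LocalRing

variable {R : Type u} [CommRing R] [IsLocalRing R]

theorem baer_of_forall_exists_extension (hm : maximalIdeal R ^ 2 = ⊥) {Q : Type v}
    [AddCommGroup Q] [Module R Q]
    (hQ : ∀ f : maximalIdeal R →ₗ[R] Q, ∃ g : R →ₗ[R] Q, g ∘ₗ (maximalIdeal R).subtype = f) :
    Module.Baer R Q := by
  intro I f
  rcases eq_or_ne I ⊤ with rfl | hI
  · exact ⟨f ∘ₗ Submodule.topEquiv.symm.toLinearMap, fun _ _ => rfl⟩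
  have hle : I ≤ maximalIdeal R := le_maximalIdeal hI
  have : IsSemisimpleModule R (maximalIdeal R) :=
    isSemisimpleModule_of_isTorsionBySet (isTorsionBySet_of_le_smul_top hm (by simp))
  obtain ⟨f', hf'⟩ := IsSemisimpleModule.extension_property (Submodule.inclusion hle)
    (Submodule.inclusion_injective hle) f
  obtain ⟨g, hg⟩ := hQ f'
  refine ⟨g, fun x hx => ?_⟩
  calc g x = f' ⟨x, hle hx⟩ := LinearMap.congr_fun hg ⟨x, hle hx⟩
    _ = f ⟨x, hx⟩ := LinearMap.congr_fun hf' ⟨x, hx⟩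

variable {Q : Type u} [AddCommGroup Q] [Module R Q]

theorem subsingleton_ext_quotient_maximalIdeal_of_ker_le_smul_top (hm : maximalIdeal R ^ 2 = ⊥)
    {P L : Type u} [AddCommGroup P] [Module R P] [Module.Projective R P] [AddCommGroup L]
    [Module R L] {φ : P →ₗ[R] L} (hφ : Function.Surjective φ)
    (hker : LinearMap.ker φ ≤ maximalIdeal R • ⊤) (hker_ne : LinearMap.ker φ ≠ ⊥) {n : ℕ}
    [Subsingleton (Abelian.Ext (ModuleCat.of R L) (ModuleCat.of R Q) (n + 2))] :
    Subsingleton (Abelian.Ext (ModuleCat.of R (R ⧸ maximalIdeal R)) (ModuleCat.of R Q)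
      (n + 1)) := by
  have : Projective φ.shortComplexKer.X₂ := (IsProjective.iff_projective _).1 ‹_›
  have := Abelian.Ext.subsingleton_of_projective φ.shortComplexKer.X₂ (ModuleCat.of R Q) n
  have := subsingleton_ext_X₁_of_shortExact (LinearMap.shortExact_shortComplexKer hφ)
    (Y := ModuleCat.of R Q) (n := n + 1)
  have := Submodule.nontrivial_iff_ne_bot.2 hker_ne
  obtain ⟨r⟩ := nonempty_retract_quotient_of_isTorsionBySet
    (isTorsionBySet_of_le_smul_top hm hker)
  exact subsingleton_ext_of_retract r

theorem injective_of_subsingleton_ext_quotient_maximalIdeal (hm : maximalIdeal R ^ 2 = ⊥) {n : ℕ}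
    (h : Subsingleton (Abelian.Ext (ModuleCat.of R (R ⧸ maximalIdeal R)) (ModuleCat.of R Q)
      (n + 1))) : Module.Injective R Q := by
  induction n with
  | zero =>
    exact (baer_of_forall_exists_extension hm
      (exists_extension_of_subsingleton_ext_one _)).injective
  | succ n ih =>
    rcases eq_or_ne (maximalIdeal R) ⊥ with hbot | hne
    · have : Subsingleton (maximalIdeal R) := Submodule.subsingleton_iff_eq_bot.2 hbot
      exact (baer_of_forall_exists_extension hm fun _ => ⟨0, Subsingleton.elim _ _⟩).injective
    · exact ih <| subsingleton_ext_quotient_maximalIdeal_of_ker_le_smul_top hm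
        (maximalIdeal R).mkQ_surjective (by simp) (by simpa using hne)

end LocalRing

theorem isGorensteinLocalRing_of_injective {R : Type} [CommRing R] [IsNoetherianRing R]
    [IsLocalRing R] [Module.Injective R R] : IsGorensteinLocalRing R := by
  have := Module.injective_object_of_injective_module R R
  refine ⟨inferInstance, inferInstance, 0, fun N i hi => ?_⟩
  obtain ⟨i, rfl⟩ := Nat.exists_eq_add_one.2 hi
  exact (subsingleton_derivedExt_iff_subsingleton_ext _ _ i).2
    (Abelian.Ext.subsingleton_of_injective _ _ i)

theorem stmt_0_general {R : Type u} [CommRing R] [IsLocalRing R] (hm : maximalIdeal R ^ 2 = ⊥)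
    {Q : Type u} [AddCommGroup Q] [Module R Q] (hQ : ¬ Module.Injective R Q)
    {M : Type u} [AddCommGroup M] [Module R M] {n : ℕ}
    (hM : Subsingleton (Abelian.Ext (ModuleCat.of R M) (ModuleCat.of R Q) (n + 2))) :
    Module.Free R M := by
  obtain ⟨ι, φ, hφ, hker⟩ :=
    exists_finsupp_surjective_ker_le_smul_top (maximalIdeal R) ⟨2, hm⟩ M
  by_cases hker_bot : LinearMap.ker φ = ⊥
  · exact Module.Free.of_equiv (LinearEquiv.ofBijective φ ⟨LinearMap.ker_eq_bot.1 hker_bot, hφ⟩)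
  · exact absurd (injective_of_subsingleton_ext_quotient_maximalIdeal hm
      (subsingleton_ext_quotient_maximalIdeal_of_ker_le_smul_top (n := n) hm hφ hker hker_bot)) hQ

/-- over an Artinian local ring with m² = 0 that is not Gorenstein,
every finitely generated module of G-dimension zero is free. -/
theorem stmt_0 (R : Type) [CommRing R] [IsArtinianRing R] [IsLocalRing R]
    (hm2 : (IsLocalRing.maximalIdeal R) ^ 2 = ⊥)
    (hng : ¬ IsGorensteinLocalRing R)
    (M : Type) [AddCommGroup M] [Module R M] [Module.Finite R M]
    (hG : GDimZero R M) : Module.Free R M :=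
  stmt_0_general hm2 (fun _ => hng isGorensteinLocalRing_of_injective)
    ((subsingleton_derivedExt_iff_subsingleton_ext _ _ 1).1 (hG.2.1 2 two_pos))
end

section
/- Let (R,m) be a Cohen-Macaulay local ring with minimal multiplicity (i.e., there is a system of parameters x₁,...,x_d with (x₁,...,x_d)m = m²) that is not Gorenstein. Then every finitely generated R-module of G-dimension zero is free. -/
open CategoryTheory

/-!
Let `L` be the kernel of a minimal cover `F → M`, so that `L ≤ 𝔪F`. If `M` is regular along the
given system of parameters `x`, then `L/xL` embeds in `F/xF`, and `𝔪² ≤ (x)` makes `L/xL` a vector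
space over the residue field `k`. When `L ≠ 0`, this space contains `k` as a direct summand, so the
vanishing of `Ext^{>0}(M, R)` gives `Ext^{>d}(k, R) = 0`, which bounds the injective dimension of
`R`. Hence `L = 0` and `M` is free.

For general `M`, each passage to a syzygy gains one regular element of `x`, and freeness descends:
if `L` is free and nonzero, a coordinate function of `L` extends to `F` because `Ext¹(M, R) = 0`,
but then it takes values in `𝔪` on `L ≤ 𝔪F`.
-/

section ExtVanishing

universe w v u

variable {C : Type u} [Category.{v} C] [Abelian C] [HasExt.{w} C]

/-- `Ext^i(X, Y) = 0` for all `i > n`. For fixed `Y` this plays the role of a bound on a homological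
dimension of `X`, and behaves like one in short exact sequences. -/
def ExtVanishesAbove (X Y : C) (n : ℕ) : Prop :=
  ∀ i, n < i → Subsingleton (Abelian.Ext X Y i)

namespace ExtVanishesAbove

variable {X X' Y : C} {n : ℕ}

lemma of_retract (r : Retract X X') (h : ExtVanishesAbove X' Y n) : ExtVanishesAbove X Y n := by
  intro i hi
  have := h i hi
  refine subsingleton_of_forall_eq 0 fun x ↦ ?_
  calc x = (Abelian.Ext.mk₀ r.i).comp ((Abelian.Ext.mk₀ r.r).comp x (zero_add i)) (zero_add i) := by
        rw [Abelian.Ext.mk₀_comp_mk₀_assoc, r.retract, Abelian.Ext.mk₀_id_comp]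
    _ = 0 := by rw [Subsingleton.elim ((Abelian.Ext.mk₀ r.r).comp x _) 0, Abelian.Ext.comp_zero]

lemma of_projective [Projective X] : ExtVanishesAbove X Y n := by
  intro i hi
  obtain ⟨i, rfl⟩ := Nat.exists_eq_add_of_lt hi
  exact Abelian.Ext.subsingleton_of_projective X Y (n + i)

variable {S : ShortComplex C}

lemma X₁ (hS : S.ShortExact) (h₂ : ExtVanishesAbove S.X₂ Y n) (h₃ : ExtVanishesAbove S.X₃ Y n) :
    ExtVanishesAbove S.X₁ Y n := by
  intro i hi
  have := h₂ i hi
  have := h₃ (1 + i) (by lia)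
  refine subsingleton_of_forall_eq 0 fun x ↦ ?_
  obtain ⟨y, rfl⟩ := Abelian.Ext.contravariant_sequence_exact₁ hS Y x rfl (Subsingleton.elim _ _)
  rw [Subsingleton.elim y 0, Abelian.Ext.comp_zero]

lemma X₂ (hS : S.ShortExact) (h₁ : ExtVanishesAbove S.X₁ Y n) (h₃ : ExtVanishesAbove S.X₃ Y n) :
    ExtVanishesAbove S.X₂ Y n := by
  intro i hi
  have := h₁ i hi
  have := h₃ i hi
  refine subsingleton_of_forall_eq 0 fun x ↦ ?_
  obtain ⟨y, rfl⟩ := Abelian.Ext.contravariant_sequence_exact₂ hS Y x (Subsingleton.elim _ _)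
  rw [Subsingleton.elim y 0, Abelian.Ext.comp_zero]

lemma X₃ (hS : S.ShortExact) (h₁ : ExtVanishesAbove S.X₁ Y n)
    (h₂ : ExtVanishesAbove S.X₂ Y (n + 1)) : ExtVanishesAbove S.X₃ Y (n + 1) := by
  intro i hi
  obtain ⟨i, rfl⟩ := Nat.exists_eq_add_of_le' (Nat.one_le_of_lt hi)
  have := h₁ i (by lia)
  have := h₂ (i + 1) hi
  refine subsingleton_of_forall_eq 0 fun x ↦ ?_
  obtain ⟨y, rfl⟩ := Abelian.Ext.contravariant_sequence_exact₃ hS Y x (Subsingleton.elim _ _)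
    (add_comm 1 i)
  rw [Subsingleton.elim y 0, Abelian.Ext.comp_zero]

end ExtVanishesAbove

lemma exists_comp_eq_of_subsingleton_ext_one {S : ShortComplex C} (hS : S.ShortExact) {Y : C}
    (h : Subsingleton (Abelian.Ext S.X₃ Y 1)) (g : S.X₁ ⟶ Y) : ∃ φ : S.X₂ ⟶ Y, S.f ≫ φ = g := by
  obtain ⟨y, hy⟩ := Abelian.Ext.contravariant_sequence_exact₁ hS Y (Abelian.Ext.mk₀ g) rfl
    (Subsingleton.elim (α := Abelian.Ext S.X₃ Y 1) _ _)
  obtain ⟨φ, rfl⟩ := (Abelian.Ext.mk₀_bijective S.X₂ Y).2 y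
  exact ⟨φ, (Abelian.Ext.mk₀_bijective S.X₁ Y).1 (by rw [← Abelian.Ext.mk₀_comp_mk₀, hy])⟩

lemma subsingleton_ext_X₃ {S : ShortComplex C} (hS : S.ShortExact) (X : C) {n : ℕ}
    (h₂ : Subsingleton (Abelian.Ext X S.X₂ n)) (h₁ : Subsingleton (Abelian.Ext X S.X₁ (n + 1))) :
    Subsingleton (Abelian.Ext X S.X₃ n) := by
  refine subsingleton_of_forall_eq 0 fun x ↦ ?_
  obtain ⟨y, rfl⟩ := Abelian.Ext.covariant_sequence_exact₃ X hS x rfl (Subsingleton.elim _ _)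
  rw [Subsingleton.elim y 0, Abelian.Ext.zero_comp]

end ExtVanishing

section DerivedFunctorExt

universe w v u

variable {R : Type*} [CommRing R] {C : Type u} [Category.{v} C] [Abelian C] [Linear R C]
  {X Y : C} (P : ProjectiveResolution X) (n : ℕ)

lemma subsingleton_derivedExt_succ_iff [EnoughProjectives C] :
    Subsingleton (((Ext R C (n + 1)).obj (Opposite.op X)).obj Y) ↔
      ∀ f : P.complex.X (n + 1) ⟶ Y, P.complex.d (n + 2) (n + 1) ≫ f = 0 →
        ∃ g : P.complex.X n ⟶ Y, P.complex.d (n + 1) n ≫ g = f := by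
  rw [← ModuleCat.isZero_iff_subsingleton, (P.isoExt (R := R) (n + 1) Y).isZero_iff,
    ← HomologicalComplex.exactAt_iff_isZero_homology,
    HomologicalComplex.exactAt_iff' _ n (n + 1) (n + 2) (by simp) (by simp),
    ShortComplex.moduleCat_exact_iff]
  rfl

lemma subsingleton_abelianExt_succ_iff [HasExt.{w} C] :
    Subsingleton (Abelian.Ext X Y (n + 1)) ↔
      ∀ f : P.complex.X (n + 1) ⟶ Y, P.complex.d (n + 2) (n + 1) ≫ f = 0 →
        ∃ g : P.complex.X n ⟶ Y, P.complex.d (n + 1) n ≫ g = f := by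
  constructor
  · intro _ f hf
    exact (P.extMk_eq_zero_iff f (n + 2) rfl hf n rfl).1 (Subsingleton.elim _ _)
  · intro h
    refine subsingleton_of_forall_eq 0 fun x ↦ ?_
    obtain ⟨f, hf, rfl⟩ := P.extMk_surjective x (n + 2) rfl
    exact (P.extMk_eq_zero_iff f (n + 2) rfl hf n rfl).2 (h f hf)

lemma subsingleton_derivedExt_succ_iff_abelianExt [EnoughProjectives C] [HasExt.{w} C] :
    Subsingleton (((Ext R C (n + 1)).obj (Opposite.op X)).obj Y) ↔
      Subsingleton (Abelian.Ext X Y (n + 1)) :=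
  (subsingleton_derivedExt_succ_iff (projectiveResolution X) n).trans
    (subsingleton_abelianExt_succ_iff (projectiveResolution X) n).symm

end DerivedFunctorExt

section InjectiveDimension

universe u

variable {R : Type u} [Ring R]

lemma hasInjectiveDimensionLE_zero_of_subsingleton_ext_one (A : ModuleCat.{u} R)
    (h : ∀ I : Ideal R, Subsingleton (Abelian.Ext (ModuleCat.of R (R ⧸ I)) A 1)) :
    HasInjectiveDimensionLE A 0 := by
  have baer : Module.Baer R A := fun I g ↦ by
    obtain ⟨φ, hφ⟩ := exists_comp_eq_of_subsingleton_ext_one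
      (ModuleCat.shortComplex_shortExact
        (ModuleCat.shortComplexOfCompEqZero I.subtype I.mkQ
          (LinearMap.exact_subtype_mkQ I).linearMap_comp_eq_zero)
        (LinearMap.exact_subtype_mkQ I) I.injective_subtype I.mkQ_surjective)
      (h I) (ModuleCat.ofHom g)
    exact ⟨φ.hom, fun x hx ↦ LinearMap.congr_fun (ModuleCat.hom_ext_iff.1 hφ) ⟨x, hx⟩⟩
  exact injective_iff_hasInjectiveDimensionLT_one.1
    ((Module.injective_iff_injective_object R A).1 baer.injective)

lemma hasInjectiveDimensionLE_of_subsingleton_ext_quotient (n : ℕ) (A : ModuleCat.{u} R)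
    (h : ∀ I : Ideal R, Subsingleton (Abelian.Ext (ModuleCat.of R (R ⧸ I)) A (n + 1))) :
    HasInjectiveDimensionLE A n := by
  induction n generalizing A with
  | zero => exact hasInjectiveDimensionLE_zero_of_subsingleton_ext_one A h
  | succ n ih =>
    let S := ShortComplex.mk (Injective.ι A) (Limits.cokernel.π (Injective.ι A)) (by simp)
    have hS : S.ShortExact := { exact := ShortComplex.exact_cokernel _ }
    have : Injective S.X₂ := inferInstanceAs (Injective (Injective.under A))
    have h₃ : HasInjectiveDimensionLE S.X₃ n := ih S.X₃ fun I ↦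
      subsingleton_ext_X₃ hS _ (Abelian.Ext.subsingleton_of_injective _ _ n) (h I)
    exact hS.hasInjectiveDimensionLT_X₁ (n + 1) h₃ inferInstance

end InjectiveDimension

section ModuleExt

universe u

variable {R : Type u} [CommRing R] {A : ModuleCat.{u} R} {n : ℕ}

namespace ExtVanishesAbove

variable {N N' : Type u} [AddCommGroup N] [Module R N] [AddCommGroup N'] [Module R N']

lemma of_linearEquiv (e : N ≃ₗ[R] N') (h : ExtVanishesAbove (ModuleCat.of R N') A n) :
    ExtVanishesAbove (ModuleCat.of R N) A n :=
  h.of_retract e.toModuleIso.retract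

lemma of_subsingleton [Subsingleton N] : ExtVanishesAbove (ModuleCat.of R N) A n :=
  have : Projective (ModuleCat.of R N) := (ModuleCat.isZero_of_subsingleton _).projective
  of_projective

open Pointwise in
lemma quotSMulTop {a : R} (ha : IsSMulRegular N a) (h : ExtVanishesAbove (ModuleCat.of R N) A n) :
    ExtVanishesAbove (ModuleCat.of R (QuotSMulTop a N)) A (n + 1) :=
  X₃ (IsSMulRegular.smulShortComplex_shortExact (M := ModuleCat.of R N) ha) h
    fun i hi ↦ h i (by lia)

lemma quotient_ofList {rs : List R} (h : ExtVanishesAbove (ModuleCat.of R N) A n)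
    (hN : RingTheory.Sequence.IsWeaklyRegular N rs) :
    ExtVanishesAbove (ModuleCat.of R (N ⧸ (Ideal.ofList rs • ⊤ : Submodule R N))) A
      (n + rs.length) := by
  induction rs generalizing N n with
  | nil => exact h.of_linearEquiv (Submodule.quotEquivOfEqBot _ (by simp))
  | cons r rs ih =>
    rw [RingTheory.Sequence.isWeaklyRegular_cons_iff] at hN
    rw [List.length_cons, add_comm rs.length, ← add_assoc]
    exact (ih (h.quotSMulTop hN.1) hN.2).of_linearEquiv
      (Submodule.quotOfListConsSMulTopEquivQuotSMulTopInner N r rs)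

lemma residueField_of_smul_eq_zero {I : Ideal R} [I.IsMaximal] [Nontrivial N]
    (hN : ∀ a ∈ I, ∀ x : N, a • x = 0) (h : ExtVanishesAbove (ModuleCat.of R N) A n) :
    ExtVanishesAbove (ModuleCat.of R (R ⧸ I)) A n := by
  have torsion : Module.IsTorsionBySet R N I := fun x a ↦ hN a a.2 x
  let : Field (R ⧸ I) := Ideal.Quotient.field I
  let : Module (R ⧸ I) N := torsion.module
  have : IsScalarTower R (R ⧸ I) N := torsion.isScalarTower
  obtain ⟨x, hx⟩ := exists_ne (0 : N)
  obtain ⟨g, hg⟩ := (LinearMap.toSpanSingleton (R ⧸ I) N x).exists_leftInverse_of_injective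
    (LinearMap.ker_toSpanSingleton (R ⧸ I) hx)
  exact h.of_retract ⟨ModuleCat.ofHom ((LinearMap.toSpanSingleton (R ⧸ I) N x).restrictScalars R),
    ModuleCat.ofHom (g.restrictScalars R), ModuleCat.hom_ext (LinearMap.ext fun y ↦
      LinearMap.congr_fun hg y)⟩

variable [IsNoetherianRing R] [Module.Finite R N]

lemma of_forall_quotient_prime (h : ∀ p : Ideal R, p.IsPrime → Module.annihilator R N ≤ p →
      ExtVanishesAbove (ModuleCat.of R (R ⧸ p)) A n) :
    ExtVanishesAbove (ModuleCat.of R N) A n := by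
  induction ‹Module.Finite R N› using
    IsNoetherianRing.induction_on_isQuotientEquivQuotientPrime R with
  | subsingleton N => exact of_subsingleton
  | quotient N p e =>
    exact (h p.1 p.2 (by rw [e.annihilator_eq, Ideal.annihilator_quotient])).of_linearEquiv e
  | exact N₁ N₂ N₃ f g hf hg hfg h₁ h₃ =>
    refine X₂ (ModuleCat.shortComplex_shortExact
      (ModuleCat.shortComplexOfCompEqZero f g hfg.linearMap_comp_eq_zero) hfg hf hg) ?_ ?_
    · exact h₁ fun p hp hle ↦ h p hp ((f.annihilator_le_of_injective hf).trans hle)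
    · exact h₃ fun p hp hle ↦ h p hp ((g.annihilator_le_of_surjective hg).trans hle)

open IsLocalRing

variable [IsLocalRing R] [Module.Finite R A]

open Pointwise in
lemma of_quotSMulTop {a : R} (ha : a ∈ maximalIdeal R) (hreg : IsSMulRegular N a)
    (h : ExtVanishesAbove (ModuleCat.of R (QuotSMulTop a N)) A n) :
    ExtVanishesAbove (ModuleCat.of R N) A n := by
  intro i hi
  by_contra! hnt
  refine Submodule.top_ne_pointwise_smul_of_mem_jacobson_annihilator
    (R := R) (M := Abelian.Ext (ModuleCat.of R N) A i) (maximalIdeal_le_jacobson _ ha) ?_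
  refine (top_le_iff.1 fun x _ ↦ ?_).symm
  have := h (1 + i) (by lia)
  obtain ⟨y, hy⟩ : ∃ y : Abelian.Ext (ModuleCat.of R N) A i,
      (Abelian.Ext.mk₀ (a • 𝟙 (ModuleCat.of R N))).comp y (zero_add i) = x :=
    Abelian.Ext.contravariant_sequence_exact₁
      (IsSMulRegular.smulShortComplex_shortExact (M := ModuleCat.of R N) hreg) A x rfl
      (Subsingleton.elim (α := Abelian.Ext (ModuleCat.of R (QuotSMulTop a N)) A (1 + i)) _ _)
  rw [← hy, Abelian.Ext.mk₀_smul, Abelian.Ext.smul_comp, Abelian.Ext.mk₀_id_comp]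
  exact Submodule.smul_mem_pointwise_smul y a ⊤ trivial

lemma quotient_prime_of_residueField
    (h : ExtVanishesAbove (ModuleCat.of R (R ⧸ maximalIdeal R)) A n) (p : Ideal R)
    (hp : p.IsPrime) : ExtVanishesAbove (ModuleCat.of R (R ⧸ p)) A n := by
  induction p using IsNoetherian.induction with
  | hgt p ih =>
    obtain rfl | hlt := (le_maximalIdeal hp.ne_top).eq_or_lt
    · exact h
    obtain ⟨a, ha, hap⟩ := SetLike.exists_of_lt hlt
    have hreg : IsSMulRegular (R ⧸ p) a := (isSMulRegular_quotient_iff_mem_of_smul_mem p a).2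
      fun x hx ↦ (hp.mem_or_mem hx).resolve_left hap
    refine of_quotSMulTop ha hreg (of_forall_quotient_prime fun q hq hle ↦ ih q ?_ hq)
    have hpq : p ≤ q := calc
      p = Module.annihilator R (R ⧸ p) := Ideal.annihilator_quotient.symm
      _ ≤ Module.annihilator R (QuotSMulTop a (R ⧸ p)) :=
        LinearMap.annihilator_le_of_surjective _ (Submodule.mkQ_surjective _)
      _ ≤ q := hle
    exact hpq.lt_of_not_ge fun hqp ↦ hap (hqp (hle (QuotSMulTop.mem_annihilator _ a)))

lemma of_residueField (h : ExtVanishesAbove (ModuleCat.of R (R ⧸ maximalIdeal R)) A n) :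
    ExtVanishesAbove (ModuleCat.of R N) A n :=
  of_forall_quotient_prime fun p hp _ ↦ h.quotient_prime_of_residueField p hp

end ExtVanishesAbove

lemma hasInjectiveDimensionLE_of_extVanishesAbove_residueField [IsNoetherianRing R] [IsLocalRing R]
    [Module.Finite R A]
    (h : ExtVanishesAbove (ModuleCat.of R (R ⧸ IsLocalRing.maximalIdeal R)) A n) :
    HasInjectiveDimensionLE A n :=
  hasInjectiveDimensionLE_of_subsingleton_ext_quotient n A fun _ ↦
    h.of_residueField (n + 1) n.lt_succ_self

end ModuleExt

section RegularSequence

open RingTheory.Sequence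

variable {R : Type*} [CommRing R] {L F M : Type*} [AddCommGroup L] [Module R L] [AddCommGroup F]
  [Module R F] [AddCommGroup M] [Module R M] {rs : List R}

lemma isWeaklyRegular_of_module_flat [Module.Flat R F] (h : IsWeaklyRegular R rs) :
    IsWeaklyRegular F rs :=
  ((TensorProduct.rid R F).isWeaklyRegular_congr rs).1 h.isWeaklyRegular_lTensor

lemma isWeaklyRegular_of_isPrefix {rs' : List R} (h : IsWeaklyRegular M rs) (hle : rs' <+: rs) :
    IsWeaklyRegular M rs' := by
  obtain ⟨_, rfl⟩ := hle
  exact ((isWeaklyRegular_append_iff M _ _).1 h).1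

variable {f : L →ₗ[R] F} {g : F →ₗ[R] M}

lemma injective_mapQ_ofList_smul_top (hf : Function.Injective f) (hfg : Function.Exact f g)
    (hg : Function.Surjective g) (h : IsWeaklyRegular M rs) :
    Function.Injective (Submodule.mapQ _ _ f
      (Submodule.smul_top_le_comap_smul_top (Ideal.ofList rs) f)) := by
  have hexact := map_first_exact_on_four_term_right_exact_of_isSMulRegular_last
    ((LinearMap.exact_zero_iff_injective PUnit f).2 hf) hfg hg h
  rwa [Submodule.mapQ_zero, LinearMap.exact_zero_iff_injective] at hexact

lemma isWeaklyRegular_of_exact (hf : Function.Injective f) (hfg : Function.Exact f g)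
    (hg : Function.Surjective g) (hF : IsWeaklyRegular F rs) (hM : IsWeaklyRegular M rs.dropLast) :
    IsWeaklyRegular L rs := by
  refine ⟨fun i hi ↦ (hF.regular_mod_prev i hi).of_injective _
    (injective_mapQ_ofList_smul_top hf hfg hg (isWeaklyRegular_of_isPrefix hM ?_))⟩
  rw [List.dropLast_eq_take]
  exact List.take_prefix_take_left (by lia)

lemma smul_eq_zero_of_le_smul_top {I J : Ideal R} {N : Submodule R F} (hJ : J ^ 2 ≤ I)
    (hN : N ≤ J • ⊤)
    (hinj : Function.Injective
      (Submodule.mapQ _ _ N.subtype (Submodule.smul_top_le_comap_smul_top I N.subtype)))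
    {a : R} (ha : a ∈ J) (x : N ⧸ (I • ⊤ : Submodule R N)) : a • x = 0 := by
  obtain ⟨x, rfl⟩ := Submodule.Quotient.mk_surjective _ x
  apply hinj
  rw [map_smul, map_zero, Submodule.mapQ_apply, ← Submodule.Quotient.mk_smul,
    Submodule.Quotient.mk_eq_zero]
  refine Submodule.smul_mono_left hJ ?_
  rw [pow_two, Submodule.mul_smul]
  exact Submodule.smul_mem_smul ha (hN x.2)

end RegularSequence

section MinimalCover

open IsLocalRing TensorProduct

variable {R : Type*} [CommRing R] [IsLocalRing R] {M : Type*} [AddCommGroup M] [Module R M]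

lemma exists_surjective_ker_le_smul_top [Module.Finite R M] :
    ∃ (n : ℕ) (f : (Fin n → R) →ₗ[R] M), Function.Surjective f ∧
      LinearMap.ker f ≤ maximalIdeal R • ⊤ := by
  let b := Module.finBasis (ResidueField R) (ResidueField R ⊗[R] M)
  obtain ⟨v, hv⟩ := (TensorProduct.mk_surjective R M (ResidueField R)
    Ideal.Quotient.mk_surjective).comp_left b
  refine ⟨_, Fintype.linearCombination R v, ?_, fun c hc ↦ ?_⟩
  · rw [← LinearMap.range_eq_top, Fintype.range_linearCombination]
    exact span_eq_top_of_tmul_eq_basis v b (congr_fun hv)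
  · have hsum : ∑ i, residue R (c i) • b i = 0 := calc
      ∑ i, residue R (c i) • b i = 1 ⊗ₜ[R] Fintype.linearCombination R v c := by
        simp [Fintype.linearCombination_apply, TensorProduct.tmul_sum, ← congr_fun hv,
          TensorProduct.smul_tmul', TensorProduct.tmul_smul, Algebra.smul_def]
      _ = 0 := by rw [LinearMap.mem_ker.1 hc, TensorProduct.tmul_zero]
    have hmem (i) : c i ∈ maximalIdeal R := (residue_eq_zero_iff _).1
      (Fintype.linearIndependent_iff.1 b.linearIndependent _ hsum i)
    rw [pi_eq_sum_univ' c]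
    exact Submodule.sum_mem _ fun i _ ↦ Submodule.smul_mem_smul (hmem i) trivial

end MinimalCover

section Syzygies

open IsLocalRing RingTheory.Sequence

universe u

variable {R : Type u} [CommRing R] {F M : Type u} [AddCommGroup F] [Module R F] [AddCommGroup M]
  [Module R M] {f : F →ₗ[R] M}

lemma extVanishesAbove_ker [Module.Projective R F] (hf : Function.Surjective f)
    {A : ModuleCat.{u} R} {n : ℕ} (h : ExtVanishesAbove (ModuleCat.of R M) A n) :
    ExtVanishesAbove (ModuleCat.of R (LinearMap.ker f)) A n :=
  have : Projective (ModuleCat.of R F) := inferInstance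
  ExtVanishesAbove.X₁ (LinearMap.shortExact_shortComplexKer hf) .of_projective h

variable [IsLocalRing R]

lemma ker_eq_bot_of_free_ker [Module.Free R (LinearMap.ker f)] (hf : Function.Surjective f)
    (hker : LinearMap.ker f ≤ maximalIdeal R • ⊤)
    (hext : Subsingleton (Abelian.Ext (ModuleCat.of R M) (ModuleCat.of R R) 1)) :
    LinearMap.ker f = ⊥ := by
  by_contra hne
  have : Nontrivial (LinearMap.ker f) := Submodule.nontrivial_iff_ne_bot.2 hne
  let b := Module.Free.chooseBasis R (LinearMap.ker f)
  obtain ⟨i⟩ := b.index_nonempty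
  obtain ⟨φ, hφ⟩ := exists_comp_eq_of_subsingleton_ext_one
    (LinearMap.shortExact_shortComplexKer hf) hext (ModuleCat.ofHom (b.coord i))
  have eq_one : φ.hom (b i : F) = 1 := by
    simpa using LinearMap.congr_fun (ModuleCat.hom_ext_iff.1 hφ) (b i)
  have mem : φ.hom (b i : F) ∈ maximalIdeal R := by
    simpa using Submodule.smul_top_le_comap_smul_top (maximalIdeal R) φ.hom (hker (b i).2)
  exact (maximalIdeal R).one_notMem (eq_one ▸ mem)

variable [IsNoetherianRing R] [Module.Finite R F] [Module.Free R F] {rs : List R}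

lemma hasInjectiveDimensionLE_of_ker_ne_bot (hmem : ∀ r ∈ rs, r ∈ maximalIdeal R)
    (hreg : IsWeaklyRegular R rs) (hsq : maximalIdeal R ^ 2 ≤ Ideal.ofList rs)
    (hf : Function.Surjective f) (hker : LinearMap.ker f ≤ maximalIdeal R • ⊤)
    (hne : LinearMap.ker f ≠ ⊥) (hM : IsWeaklyRegular M rs)
    (hext : ExtVanishesAbove (ModuleCat.of R M) (ModuleCat.of R R) 0) :
    HasInjectiveDimensionLE (ModuleCat.of R R) rs.length := by
  let L := LinearMap.ker f
  have hL : IsWeaklyRegular L rs :=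
    isWeaklyRegular_of_exact L.injective_subtype (LinearMap.exact_subtype_ker_map f) hf
      (isWeaklyRegular_of_module_flat hreg) (isWeaklyRegular_of_isPrefix hM (by grind))
  have hnt : Nontrivial (L ⧸ (Ideal.ofList rs • ⊤ : Submodule R L)) := by
    have : Nontrivial L := Submodule.nontrivial_iff_ne_bot.2 hne
    exact Submodule.Quotient.nontrivial_iff.2
      (Submodule.top_ne_ideal_smul_of_le_jacobson_annihilator
        ((Ideal.span_le.2 hmem).trans (maximalIdeal_le_jacobson _))).symm
  have hkill : ∀ a ∈ maximalIdeal R, ∀ x : L ⧸ (Ideal.ofList rs • ⊤ : Submodule R L), a • x = 0 :=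
    fun a ha ↦ smul_eq_zero_of_le_smul_top hsq hker (injective_mapQ_ofList_smul_top
      L.injective_subtype (LinearMap.exact_subtype_ker_map f) hf hM) ha
  have hquot : ExtVanishesAbove (ModuleCat.of R (L ⧸ (Ideal.ofList rs • ⊤ : Submodule R L)))
      (ModuleCat.of R R) rs.length := by
    simpa using (extVanishesAbove_ker hf hext).quotient_ofList hL
  exact hasInjectiveDimensionLE_of_extVanishesAbove_residueField
    (hquot.residueField_of_smul_eq_zero hkill)

end Syzygies

section Freeness

open IsLocalRing RingTheory.Sequence

universe u

variable {R : Type u} [CommRing R] [IsNoetherianRing R] [IsLocalRing R] {rs : List R}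

lemma free_of_isWeaklyRegular_of_append_eq (hmem : ∀ r ∈ rs, r ∈ maximalIdeal R)
    (hreg : IsWeaklyRegular R rs) (hsq : maximalIdeal R ^ 2 ≤ Ideal.ofList rs)
    (hng : ¬ HasInjectiveDimensionLE (ModuleCat.of R R) rs.length) (rs₁ rs₂ : List R)
    (hrs : rs₁ ++ rs₂ = rs) (M : Type u) [AddCommGroup M] [Module R M] [Module.Finite R M]
    (hM : IsWeaklyRegular M rs₁)
    (hext : ExtVanishesAbove (ModuleCat.of R M) (ModuleCat.of R R) 0) : Module.Free R M := by
  induction rs₂ generalizing rs₁ M with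
  | nil =>
    rw [List.append_nil] at hrs
    subst hrs
    obtain ⟨n, f, hf, hker⟩ := exists_surjective_ker_le_smul_top (R := R) (M := M)
    have hbot : LinearMap.ker f = ⊥ := by
      by_contra hne
      exact hng (hasInjectiveDimensionLE_of_ker_ne_bot hmem hreg hsq hf hker hne hM hext)
    exact Module.Free.of_equiv (LinearEquiv.ofBijective f ⟨LinearMap.ker_eq_bot.1 hbot, hf⟩)
  | cons r rs₂ ih =>
    rw [List.append_cons] at hrs
    obtain ⟨n, f, hf, hker⟩ := exists_surjective_ker_le_smul_top (R := R) (M := M)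
    have hL : IsWeaklyRegular (LinearMap.ker f) (rs₁ ++ [r]) :=
      isWeaklyRegular_of_exact (LinearMap.ker f).injective_subtype
        (LinearMap.exact_subtype_ker_map f) hf
        (isWeaklyRegular_of_module_flat (isWeaklyRegular_of_isPrefix hreg ⟨rs₂, hrs⟩))
        (by rwa [List.dropLast_concat])
    have : Module.Free R (LinearMap.ker f) :=
      ih (rs₁ ++ [r]) hrs _ hL (extVanishesAbove_ker hf hext)
    have hbot : LinearMap.ker f = ⊥ := ker_eq_bot_of_free_ker hf hker (hext 1 one_pos)
    exact Module.Free.of_equiv (LinearEquiv.ofBijective f ⟨LinearMap.ker_eq_bot.1 hbot, hf⟩)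

theorem stmt_1_general (hmem : ∀ r ∈ rs, r ∈ maximalIdeal R)
    (hreg : IsWeaklyRegular R rs) (hsq : maximalIdeal R ^ 2 ≤ Ideal.ofList rs)
    (hng : ¬ HasInjectiveDimensionLE (ModuleCat.of R R) rs.length)
    (M : Type u) [AddCommGroup M] [Module R M] [Module.Finite R M]
    (hext : ExtVanishesAbove (ModuleCat.of R M) (ModuleCat.of R R) 0) : Module.Free R M :=
  free_of_isWeaklyRegular_of_append_eq hmem hreg hsq hng [] rs rfl M (.nil R M) hext

end Freeness

lemma GDimZero.extVanishesAbove {R : Type} [CommRing R] {M : Type} [AddCommGroup M] [Module R M]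
    (h : GDimZero R M) : ExtVanishesAbove (ModuleCat.of R M) (ModuleCat.of R R) 0 := by
  intro i hi
  obtain ⟨i, rfl⟩ := Nat.exists_eq_add_of_le' hi
  exact (subsingleton_derivedExt_succ_iff_abelianExt i).1 (h.2.1 (i + 1) hi)

lemma isGorensteinLocalRing_of_hasInjectiveDimensionLE {R : Type} [CommRing R] [IsNoetherianRing R]
    [IsLocalRing R] {n : ℕ} (h : HasInjectiveDimensionLE (ModuleCat.of R R) n) :
    IsGorensteinLocalRing R := by
  refine ⟨inferInstance, inferInstance, n, fun N i hi ↦ ?_⟩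
  obtain ⟨i, rfl⟩ := Nat.exists_eq_add_of_le' (Nat.one_le_of_lt hi)
  exact (subsingleton_derivedExt_succ_iff_abelianExt i).2
    (HasInjectiveDimensionLT.subsingleton _ (n + 1) (i + 1) hi N)

/-- over a Cohen-Macaulay local ring with minimal multiplicity
(there is a system of parameters x with (x)m = m², which is a regular sequence)
that is not Gorenstein, every finitely generated module of G-dimension zero is free. -/
theorem stmt_1 (R : Type) [CommRing R] [IsNoetherianRing R] [IsLocalRing R]
    (hCM : ∃ (d : ℕ) (x : Fin d → R),
      ringKrullDim R = d ∧
      (∀ i, x i ∈ IsLocalRing.maximalIdeal R) ∧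
      IsLocalRing.maximalIdeal R ≤ (Ideal.span (Set.range x)).radical ∧
      RingTheory.Sequence.IsRegular R (List.ofFn x) ∧
      Ideal.span (Set.range x) * IsLocalRing.maximalIdeal R = (IsLocalRing.maximalIdeal R) ^ 2)
    (hng : ¬ IsGorensteinLocalRing R)
    (M : Type) [AddCommGroup M] [Module R M] [Module.Finite R M]
    (hG : GDimZero R M) : Module.Free R M := by
  obtain ⟨d, x, -, hmem, -, hreg, hmin⟩ := hCM
  have hx : Ideal.ofList (List.ofFn x) = Ideal.span (Set.range x) := by
    simp [Ideal.ofList, Set.range]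
  have hsq : IsLocalRing.maximalIdeal R ^ 2 ≤ Ideal.ofList (List.ofFn x) := by
    rw [hx, ← hmin]
    exact Ideal.mul_le_left
  exact stmt_1_general (List.forall_mem_ofFn_iff.2 hmem) hreg.toIsWeaklyRegular hsq
    (fun h ↦ hng (isGorensteinLocalRing_of_hasInjectiveDimensionLE h)) M hG.extVanishesAbove
end
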